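/- Let k be a field, V a finite-dimensional k-vector space, B a nondegenerate alternating bilinear form on V, and σ the adjoint involution of B. Then for every subspace N of V one has Ψ(N)^⊥ = Ψ(N^⊥); that is, an endomorphism x of V satisfies σ(x) ∘ y = 0 for all y ∈ End_k(V) with range y ⊆ N if and only if range x ⊆ N^⊥. -/

import Mathlib

/-- `Ψ(N) = {f ∈ End_R(E) : range f ⊆ N}`, as an `R`-submodule of `End_R(E)`. -/
def psi {R E : Type*} [CommRing R] [AddCommGroup E] [Module R E]
    (N : Submodule R E) : Submodule R (Module.End R E) where
  carrier := {f | LinearMap.range f ≤ N}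
  add_mem' := by
    intro f g hf hg x hx
    obtain ⟨y, rfl⟩ := LinearMap.mem_range.mp hx
    show f y + g y ∈ N
    exact N.add_mem (hf (LinearMap.mem_range_self f y)) (hg (LinearMap.mem_range_self g y))
  zero_mem' := by
    intro x hx
    obtain ⟨y, rfl⟩ := LinearMap.mem_range.mp hx
    exact N.zero_mem
  smul_mem' := by
    intro c f hf x hx
    obtain ⟨y, rfl⟩ := LinearMap.mem_range.mp hx
    show c • f y ∈ N
    exact N.smul_mem c (hf (LinearMap.mem_range_self f y))

/-- `Φ(I)`: the `R`-submodule of `E` generated by the union of the ranges of all `f ∈ I`. -/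
def phi {R E : Type*} [CommRing R] [AddCommGroup E] [Module R E]
    (I : Submodule R (Module.End R E)) : Submodule R E :=
  Submodule.span R (⋃ f ∈ I, (LinearMap.range f : Set E))

/-- A right ideal of `End_R(E)`: an `R`-submodule closed under composition on the right. -/
def IsRightIdeal {R E : Type*} [CommRing R] [AddCommGroup E] [Module R E]
    (I : Submodule R (Module.End R E)) : Prop :=
  ∀ f ∈ I, ∀ g : Module.End R E, f * g ∈ I

/-- A submodule `N` of a module `M` is a direct summand. -/
def IsSummand {R M : Type*} [CommRing R] [AddCommGroup M] [Module R M]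
    (N : Submodule R M) : Prop :=
  ∃ N' : Submodule R M, N ⊓ N' = ⊥ ∧ N ⊔ N' = ⊤

/-- A right ideal `I` of `End_R(E)` is a direct summand of `End_R(E)` as a right module
over itself: there is a right ideal `J` with `I ∩ J = 0` and `I + J = End_R(E)`. -/
def IsIdealSummand {R E : Type*} [CommRing R] [AddCommGroup E] [Module R E]
    (I : Submodule R (Module.End R E)) : Prop :=
  ∃ J : Submodule R (Module.End R E), IsRightIdeal J ∧ I ⊓ J = ⊥ ∧ I ⊔ J = ⊤

/-- For a bilinear form `B` on `V` and a subspace `N`,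
`N^⊥ = {v ∈ V : B(n, v) = 0 for all n ∈ N}`. -/
def subPerp {k V : Type*} [CommRing k] [AddCommGroup V] [Module k V]
    (B : V →ₗ[k] V →ₗ[k] k) (N : Submodule k V) : Submodule k V where
  carrier := {v | ∀ n ∈ N, B n v = 0}
  add_mem' := by
    intro x y hx hy n hn
    simp [map_add, hx n hn, hy n hn]
  zero_mem' := by
    intro n hn
    simp
  smul_mem' := by
    intro c x hx n hn
    simp [hx n hn]

/-!
The maps `Φ` and `Ψ` form a Galois connection, so for every `I` the endomorphisms `f` with
`f ∘ I = 0` are those whose kernel contains `Φ(I)`. A projection onto a direct summand `N` shows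
`Φ(Ψ(N)) = N`, so `σ(x) ∘ Ψ(N) = 0` means that `σ(x)` kills `N`. As `B` is reflexive
and nondegenerate, `σ(x) n = 0` if and only if `B(n, x u) = 0` for all `u`.
-/

section PhiPsi

variable {R E : Type*} [CommRing R] [AddCommGroup E] [Module R E]

theorem gc_phi_psi :
    GaloisConnection (phi : Submodule R (Module.End R E) → Submodule R E) psi := by
  intro I N
  simp only [phi, Submodule.span_le, Set.iUnion₂_subset_iff, SetLike.coe_subset_coe]
  rfl

theorem forall_mem_mul_eq_zero_iff_phi_le_ker {I : Submodule R (Module.End R E)}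
    {f : Module.End R E} : (∀ y ∈ I, f * y = 0) ↔ phi I ≤ LinearMap.ker f := by
  rw [gc_phi_psi.le_iff_le]
  exact forall₂_congr fun _ _ ↦ LinearMap.range_le_ker_iff.symm

theorem isSummand_iff_exists_isCompl {N : Submodule R E} :
    IsSummand N ↔ ∃ N', IsCompl N N' := by
  simp only [IsSummand, isCompl_iff, disjoint_iff, codisjoint_iff]

theorem IsSummand.phi_psi {N : Submodule R E} (hN : IsSummand N) : phi (psi N) = N := by
  obtain ⟨N', hNN'⟩ := isSummand_iff_exists_isCompl.mp hN
  have range_projection := Submodule.range_projection hNN'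
  refine le_antisymm (gc_phi_psi.l_u_le N) ?_
  calc
    N = LinearMap.range (N.projection N' hNN') := range_projection.symm
    _ ≤ phi (psi N) := gc_phi_psi.le_u_l (psi N) range_projection.le

end PhiPsi

section Adjoint

variable {R E : Type*} [CommRing R] [AddCommGroup E] [Module R E] {B : E →ₗ[R] E →ₗ[R] R}
  {x x' : Module.End R E}

theorem le_ker_adjoint_iff_mem_psi_subPerp (hrefl : B.IsRefl) (hsep : B.SeparatingRight)
    (hadj : B.IsAdjointPair B x x') {N : Submodule R E} :
    N ≤ LinearMap.ker x' ↔ x ∈ psi (subPerp B N) := by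
  have apply_eq_zero_iff (n : E) : x' n = 0 ↔ ∀ u, B n (x u) = 0 :=
    calc
      x' n = 0 ↔ ∀ u, B u (x' n) = 0 := ⟨fun h u ↦ by rw [h, map_zero], hsep (x' n)⟩
      _ ↔ ∀ u, B n (x u) = 0 := forall_congr' fun u ↦ by rw [← hadj u n, hrefl.eq_iff]
  calc
    N ≤ LinearMap.ker x' ↔ ∀ n ∈ N, ∀ u, B n (x u) = 0 :=
      forall₂_congr fun n _ ↦ apply_eq_zero_iff n
    _ ↔ ∀ u, x u ∈ subPerp B N := ⟨fun h u n hn ↦ h n hn u, fun h n hn u ↦ h u n hn⟩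
    _ ↔ x ∈ psi (subPerp B N) := Set.range_subset_iff.symm

theorem perp_psi_eq_psi_perp_general (hrefl : B.IsRefl) (hsep : B.SeparatingRight)
    (hadj : B.IsAdjointPair B x x') {N : Submodule R E} (hN : IsSummand N) :
    (∀ y ∈ psi N, x' * y = 0) ↔ x ∈ psi (subPerp B N) := by
  rw [forall_mem_mul_eq_zero_iff_phi_le_ker, hN.phi_psi]
  exact le_ker_adjoint_iff_mem_psi_subPerp hrefl hsep hadj

end Adjoint

/-- Let `B` be a nondegenerate alternating bilinear form on a finite-dimensional vector space
`V` and `σ` the adjoint involution of `B`. Then for every subspace `N` one has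
`Ψ(N)^⊥ = Ψ(N^⊥)`: an endomorphism `x` satisfies `σ(x) ∘ y = 0` for all `y` with
`range y ⊆ N` if and only if `range x ⊆ N^⊥`. -/
theorem perp_psi_eq_psi_perp (k V : Type*) [Field k] [AddCommGroup V] [Module k V]
    [FiniteDimensional k V] (B : V →ₗ[k] V →ₗ[k] k)
    (halt : ∀ v : V, B v v = 0)
    (hnd₁ : ∀ u : V, (∀ v : V, B u v = 0) → u = 0)
    (hnd₂ : ∀ v : V, (∀ u : V, B u v = 0) → v = 0)
    (σ : Module.End k V → Module.End k V)
    (hσ : ∀ (f : Module.End k V) (u v : V), B (f u) v = B u (σ f v)) :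
    ∀ (N : Submodule k V) (x : Module.End k V),
      (∀ y : Module.End k V, y ∈ psi N → σ x * y = 0) ↔ x ∈ psi (subPerp B N) := by
  intro N x
  exact perp_psi_eq_psi_perp_general (LinearMap.IsAlt.isRefl halt) hnd₂ (hσ x)
    (isSummand_iff_exists_isCompl.mpr N.exists_isCompl)
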